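/- Let F = f + h be a convex composite function on a real Hilbert space H with nonempty closed convex set of minimizers X* and minimum F*, let (x_n) be the FISTA sequence with step s = 1/L and parameter α > 3, set λ = 2α/3, and define for n ≥ 1: w_n = (2/L)(F(x_n) − F*), δ_n = ‖x_n − x_{n−1}‖², h_n = ‖x_n − x_n^*‖², γ_n^* = ‖x_n^* − x_{n−1}^*‖², b_n = ‖λ(x_{n−1} − x_{n−1}^*) + n(x_n − x_{n−1})‖², and E_n = n²·w_n + b_n, where x_n^* is the projection of x_n onto X*. Then for every integer n > λ and all real numbers A, B: (1) δ_n ≤ 2·b_n/(n−λ)² + (8α²/9)·h_n/(n−λ)²; and (2) if moreover F satisfies the global quadratic growth condition G²_μ for some μ > 0 (i.e. (μ/2)·d(x,X*)² ≤ F(x) − F* for all x ∈ H) and κ = μ/L, then A·δ_n + B·(h_{n−1} − h_n) ≤ (2|A+B| + √2·|B|/√κ)·(1 + 4α²/(9κn²))·E_n/(n−λ)² − B·γ_n^* + 2B·⟨x_{n−1} − x_{n−1}^*, x_n^* − x_{n−1}^*⟩. -/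

import Mathlib

open Filter Metric Topology RealInnerProductSpace

/-!
Write `V = λ(x - p) + t(y - x)`, where `p`, `q` are the projections of consecutive points `x`, `y`
onto a convex set. Then `(t - λ)(y - x) + λ(q - p) = V - λ(y - q)`, and the projection being
monotone, the angle of `y - x` and `q - p` is not obtuse, so the left-hand side is at least as
long as `(t - λ)(y - x)`; this bounds the step by `V` and `y - q`. Quadratic growth turns this
into a bound on `κ ‖y - q‖² + ‖y - x‖² / 2` by the energy `t² w + ‖V‖²`. After expanding
`‖x - p‖² - ‖y - q‖²`, only `‖y - x‖²` and the cross term `⟪y - q, y - x⟫` remain, and the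
weighted AM-GM inequality controls both by that same quantity.
-/

/-- `p` is a point of `K` nearest to `x`, i.e. a metric projection of `x` onto `K`. -/
def IsNearestPoint {E : Type*} [SeminormedAddCommGroup E] (K : Set E) (x p : E) : Prop :=
  p ∈ K ∧ ∀ v ∈ K, ‖x - p‖ ≤ ‖x - v‖

/-- The vector whose squared norm is the Lyapunov term `bₙ` of the FISTA sequence, when `t = n`,
`x = xₙ₋₁`, `p = xₙ₋₁*` and `y = xₙ`. -/
def anchoredVelocity {E : Type*} [AddCommGroup E] [Module ℝ E] (lam t : ℝ) (x p y : E) : E :=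
  lam • (x - p) + t • (y - x)

/-- The global quadratic growth condition `G²_μ` of `F` away from `K`, relative to the level `c`
(the minimum `F*` when `K` is the set of minimizers). -/
def HasQuadraticGrowth {E : Type*} [PseudoMetricSpace E] (F : E → ℝ) (K : Set E) (c μ : ℝ) :
    Prop :=
  ∀ v : E, μ / 2 * infDist v K ^ 2 ≤ F v - c

theorem IsNearestPoint.norm_sub_eq_infDist {E : Type*} [SeminormedAddCommGroup E] {K : Set E}
    {x p : E} (hp : IsNearestPoint K x p) : ‖x - p‖ = infDist x K := by
  refine le_antisymm ((le_infDist ⟨p, hp.1⟩).2 fun v hv => ?_) ?_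
  · simpa only [dist_eq_norm] using hp.2 v hv
  · simpa only [dist_eq_norm] using infDist_le_dist_of_mem hp.1

theorem HasQuadraticGrowth.mul_norm_sub_sq_le {E : Type*} [SeminormedAddCommGroup E]
    {F : E → ℝ} {K : Set E} {c μ L : ℝ} (hF : HasQuadraticGrowth F K c μ) (hL : 0 ≤ L)
    {y q : E} (hq : IsNearestPoint K y q) :
    μ / L * ‖y - q‖ ^ 2 ≤ 2 / L * (F y - c) := by
  calc μ / L * ‖y - q‖ ^ 2 = 2 / L * (μ / 2 * infDist y K ^ 2) := by
        rw [hq.norm_sub_eq_infDist]; ring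
    _ ≤ 2 / L * (F y - c) := by gcongr; exact hF y

theorem convex_setOf_forall_le {E : Type*} [AddCommGroup E] [Module ℝ E] {F : E → ℝ}
    (hF : ConvexOn ℝ Set.univ F) : Convex ℝ {v | ∀ u, F v ≤ F u} :=
  fun _ hv _ hw _ _ ha hb hab u =>
    (hF.convex_le (F u) ⟨trivial, hv u⟩ ⟨trivial, hw u⟩ ha hb hab).2

section SeminormedAddCommGroup

variable {H : Type*} [SeminormedAddCommGroup H] [InnerProductSpace ℝ H]

theorem norm_sub_sq_sub_norm_sub_sq (x y p q : H) :
    ‖x - p‖ ^ 2 - ‖y - q‖ ^ 2 =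
      ‖y - x‖ ^ 2 - 2 * ⟪y - q, y - x⟫ - ‖q - p‖ ^ 2 + 2 * ⟪x - p, q - p⟫ := by
  have hp : ‖x - q‖ ^ 2 = ‖x - p‖ ^ 2 - 2 * ⟪x - p, q - p⟫ + ‖q - p‖ ^ 2 := by
    rw [← norm_sub_sq_real, sub_sub_sub_cancel_right]
  have hy : ‖x - q‖ ^ 2 = ‖y - q‖ ^ 2 - 2 * ⟪y - q, y - x⟫ + ‖y - x‖ ^ 2 := by
    rw [← norm_sub_sq_real, sub_sub_sub_cancel_left]
  linarith

theorem norm_sq_le_norm_add_sq_of_inner_nonneg {a b : H} (hab : 0 ≤ ⟪a, b⟫) :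
    ‖a‖ ^ 2 ≤ ‖a + b‖ ^ 2 := by
  rw [norm_add_sq_real]
  linarith [sq_nonneg ‖b‖]

theorem norm_sub_sq_le_two_mul_add (a b : H) : ‖a - b‖ ^ 2 ≤ 2 * ‖a‖ ^ 2 + 2 * ‖b‖ ^ 2 := by
  linarith [parallelogram_law_with_norm ℝ a b, mul_self_nonneg ‖a + b‖, sq ‖a‖]

theorem two_mul_abs_inner_le {κ : ℝ} (hκ : 0 < κ) (a d : H) :
    2 * |⟪a, d⟫| ≤ √2 / √κ * (κ * ‖a‖ ^ 2 + ‖d‖ ^ 2 / 2) := by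
  have : 0 < √κ := Real.sqrt_pos.2 hκ
  calc 2 * |⟪a, d⟫| ≤ 2 * (‖a‖ * ‖d‖) := by gcongr; exact abs_real_inner_le_norm a d
    _ = √2 / √κ * (2 * (√κ * ‖a‖) * (‖d‖ / √2)) := by field_simp
    _ ≤ √2 / √κ * ((√κ * ‖a‖) ^ 2 + (‖d‖ / √2) ^ 2) := by gcongr; exact two_mul_le_add_sq _ _
    _ = √2 / √κ * (κ * ‖a‖ ^ 2 + ‖d‖ ^ 2 / 2) := by
      rw [mul_pow, div_pow, Real.sq_sqrt hκ.le, Real.sq_sqrt zero_le_two]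

theorem mul_norm_sq_sub_mul_inner_le {κ M : ℝ} (hκ : 0 < κ) {a d : H}
    (hM : κ * ‖a‖ ^ 2 + ‖d‖ ^ 2 / 2 ≤ M) (A B : ℝ) :
    (A + B) * ‖d‖ ^ 2 - 2 * B * ⟪a, d⟫ ≤ (2 * |A + B| + √2 * |B| / √κ) * M := by
  have hd : ‖d‖ ^ 2 ≤ 2 * M := by
    have : 0 ≤ κ * ‖a‖ ^ 2 := by positivity
    linarith
  have had : 2 * |⟪a, d⟫| ≤ √2 / √κ * M := (two_mul_abs_inner_le hκ a d).trans (by gcongr)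
  calc (A + B) * ‖d‖ ^ 2 - 2 * B * ⟪a, d⟫
      ≤ |A + B| * ‖d‖ ^ 2 + |B| * (2 * |⟪a, d⟫|) := by
        have hcross : -(B * ⟪a, d⟫) ≤ |B| * |⟪a, d⟫| := abs_mul B _ ▸ neg_le_abs _
        have hmain : (A + B) * ‖d‖ ^ 2 ≤ |A + B| * ‖d‖ ^ 2 := by gcongr; exact le_abs_self _
        linarith
    _ ≤ |A + B| * (2 * M) + |B| * (√2 / √κ * M) :=
        add_le_add (mul_le_mul_of_nonneg_left hd (abs_nonneg _))
          (mul_le_mul_of_nonneg_left had (abs_nonneg B))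
    _ = (2 * |A + B| + √2 * |B| / √κ) * M := by ring

end SeminormedAddCommGroup

section NormedAddCommGroup

variable {H : Type*} [NormedAddCommGroup H] [InnerProductSpace ℝ H]

namespace IsNearestPoint

variable {K : Set H} {x y p q : H}

theorem inner_sub_sub_nonpos (hp : IsNearestPoint K x p) (hK : Convex ℝ K) {v : H} (hv : v ∈ K) :
    ⟪x - p, v - p⟫ ≤ 0 := by
  refine (norm_eq_iInf_iff_real_inner_le_zero hK hp.1).1 ?_ v hv
  simpa only [infDist_eq_iInf, dist_eq_norm] using hp.norm_sub_eq_infDist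

theorem norm_sub_sq_le_inner (hp : IsNearestPoint K x p) (hq : IsNearestPoint K y q)
    (hK : Convex ℝ K) : ‖q - p‖ ^ 2 ≤ ⟪y - x, q - p⟫ := by
  have hpq : ⟪x - p, q - p⟫ ≤ 0 := hp.inner_sub_sub_nonpos hK hq.1
  have hqp : ⟪y - q, p - q⟫ ≤ 0 := hq.inner_sub_sub_nonpos hK hp.1
  have hsplit : ⟪y - x, q - p⟫ = ‖q - p‖ ^ 2 - ⟪x - p, q - p⟫ - ⟪y - q, p - q⟫ := by
    rw [← neg_sub q p, inner_neg_right, ← real_inner_self_eq_norm_sq, ← inner_sub_left,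
      sub_neg_eq_add, ← inner_add_left]
    congr 1
    abel
  linarith

theorem sq_mul_norm_sub_sq_le (hp : IsNearestPoint K x p) (hq : IsNearestPoint K y q)
    (hK : Convex ℝ K) {lam t : ℝ} (hlam : 0 ≤ lam) (hlt : lam ≤ t) :
    (t - lam) ^ 2 * ‖y - x‖ ^ 2 ≤
      2 * ‖anchoredVelocity lam t x p y‖ ^ 2 + 2 * lam ^ 2 * ‖y - q‖ ^ 2 := by
  have hinner : 0 ≤ ⟪(t - lam) • (y - x), lam • (q - p)⟫ := by
    rw [real_inner_smul_left, real_inner_smul_right]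
    have := (sq_nonneg ‖q - p‖).trans (hp.norm_sub_sq_le_inner hq hK)
    have := sub_nonneg.2 hlt
    positivity
  calc (t - lam) ^ 2 * ‖y - x‖ ^ 2 = ‖(t - lam) • (y - x)‖ ^ 2 := by
        rw [norm_smul, mul_pow, Real.norm_eq_abs, sq_abs]
    _ ≤ ‖(t - lam) • (y - x) + lam • (q - p)‖ ^ 2 := norm_sq_le_norm_add_sq_of_inner_nonneg hinner
    _ = ‖anchoredVelocity lam t x p y - lam • (y - q)‖ ^ 2 := by
        congr 2
        unfold anchoredVelocity
        module
    _ ≤ 2 * ‖anchoredVelocity lam t x p y‖ ^ 2 + 2 * ‖lam • (y - q)‖ ^ 2 :=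
        norm_sub_sq_le_two_mul_add _ _
    _ = 2 * ‖anchoredVelocity lam t x p y‖ ^ 2 + 2 * lam ^ 2 * ‖y - q‖ ^ 2 := by
        rw [norm_smul, mul_pow, Real.norm_eq_abs, sq_abs, mul_assoc]

theorem mul_norm_sub_sq_add_half_le (hp : IsNearestPoint K x p) (hq : IsNearestPoint K y q)
    (hK : Convex ℝ K) {lam t κ w : ℝ} (hlam : 0 ≤ lam) (hlt : lam < t) (hκ : 0 < κ)
    (hw : κ * ‖y - q‖ ^ 2 ≤ w) :
    κ * ‖y - q‖ ^ 2 + ‖y - x‖ ^ 2 / 2 ≤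
      (1 + lam ^ 2 / (κ * t ^ 2)) * (t ^ 2 * w + ‖anchoredVelocity lam t x p y‖ ^ 2)
        / (t - lam) ^ 2 := by
  have ht : 0 < t := hlam.trans_lt hlt
  have : 0 < t - lam := sub_pos.2 hlt
  set c := lam ^ 2 / (κ * t ^ 2) with hc
  set V := anchoredVelocity lam t x p y
  have hdist : (t - lam) ^ 2 * (κ * ‖y - q‖ ^ 2) ≤ t ^ 2 * w := by
    gcongr
    linarith
  have hlam_dist : lam ^ 2 * ‖y - q‖ ^ 2 ≤ c * (t ^ 2 * w) := by
    calc lam ^ 2 * ‖y - q‖ ^ 2 = c * (t ^ 2 * (κ * ‖y - q‖ ^ 2)) := by rw [hc]; field_simp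
      _ ≤ c * (t ^ 2 * w) := by gcongr
  have hV : 0 ≤ c * ‖V‖ ^ 2 := by positivity
  rw [le_div_iff₀ (by positivity)]
  linarith [hp.sq_mul_norm_sub_sq_le hq hK hlam hlt.le]

end IsNearestPoint

theorem fista_delta_energy_control_general {K : Set H} (hK : Convex ℝ K) {x y p q : H}
    (hp : IsNearestPoint K x p) (hq : IsNearestPoint K y q) (F : H → ℝ) (c : ℝ) {L μ α t : ℝ}
    (hL : 0 < L) (hμ : 0 < μ) (hα : 0 ≤ α) (ht : 2 * α / 3 < t) (A B : ℝ) :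
    (‖y - x‖ ^ 2 ≤ 2 * ‖anchoredVelocity (2 * α / 3) t x p y‖ ^ 2 / (t - 2 * α / 3) ^ 2
        + (8 * α ^ 2 / 9) * ‖y - q‖ ^ 2 / (t - 2 * α / 3) ^ 2) ∧
      (HasQuadraticGrowth F K c μ →
        A * ‖y - x‖ ^ 2 + B * (‖x - p‖ ^ 2 - ‖y - q‖ ^ 2) ≤
          (2 * |A + B| + √2 * |B| / √(μ / L)) * (1 + 4 * α ^ 2 / (9 * (μ / L) * t ^ 2))
              * (t ^ 2 * (2 / L * (F y - c)) + ‖anchoredVelocity (2 * α / 3) t x p y‖ ^ 2)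
              / (t - 2 * α / 3) ^ 2
            - B * ‖q - p‖ ^ 2 + 2 * B * ⟪x - p, q - p⟫) := by
  have hlam : 0 ≤ 2 * α / 3 := by positivity
  constructor
  · have : 0 < t - 2 * α / 3 := sub_pos.2 ht
    rw [← add_div, le_div_iff₀ (by positivity)]
    linarith [hp.sq_mul_norm_sub_sq_le hq hK hlam ht.le]
  · intro hF
    have hκ : 0 < μ / L := div_pos hμ hL
    have henergy := hp.mul_norm_sub_sq_add_half_le hq hK hlam ht hκ (hF.mul_norm_sub_sq_le hL.le hq)
    have hcoeff : (2 * α / 3) ^ 2 / (μ / L * t ^ 2) = 4 * α ^ 2 / (9 * (μ / L) * t ^ 2) := by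
      rw [div_pow, div_div]
      ring
    rw [hcoeff] at henergy
    rw [norm_sub_sq_sub_norm_sub_sq x y p q, mul_assoc _ (1 + _), mul_div_assoc]
    linarith [mul_norm_sq_sub_mul_inner_le hκ henergy A B]

end NormedAddCommGroup

/-- Lemma `lemma_FISTA_AB` of the paper: with `λ = 2α/3`, `α > 3`,
`bₙ = ‖λ(xₙ₋₁ - xₙ₋₁*) + n(xₙ - xₙ₋₁)‖²` and `Eₙ = n² wₙ + bₙ`, for every `n > λ` and all
reals `A, B`: (1) `δₙ ≤ 2 bₙ/(n-λ)² + (8α²/9) hₙ/(n-λ)²`; (2) under the global quadratic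
growth condition `G²_μ` (with `κ = μ/L`),
`A δₙ + B(hₙ₋₁ - hₙ) ≤ (2|A+B| + √2|B|/√κ)(1 + 4α²/(9κn²)) Eₙ/(n-λ)² - B γₙ*
  + 2B ⟪xₙ₋₁ - xₙ₋₁*, xₙ* - xₙ₋₁*⟫`. -/
theorem fista_delta_energy_control
    {H : Type*} [NormedAddCommGroup H] [InnerProductSpace ℝ H] [CompleteSpace H]
    (f h : H → ℝ) (L : ℝ) (hL : 0 < L) (f' : H → H)
    (hf_conv : ConvexOn ℝ Set.univ f)
    (hf_grad : ∀ z : H, HasGradientAt f (f' z) z)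
    (hf_lip : LipschitzWith (Real.toNNReal L) f')
    (hh_conv : ConvexOn ℝ Set.univ h)
    (hh_lsc : LowerSemicontinuous h)
    (F : H → ℝ) (hF : ∀ z : H, F z = f z + h z)
    (Xstar : Set H) (hXstar : Xstar = {z : H | ∀ w : H, F z ≤ F w})
    (hXne : Xstar.Nonempty)
    (Fstar : ℝ) (hFstar : ∀ z ∈ Xstar, F z = Fstar)
    -- the FISTA sequence with step `s = 1/L` and inertial parameter `α`
    (α : ℝ) (hα : 3 < α) (lam : ℝ) (hlam : lam = 2 * α / 3)
    (x y z : ℕ → H)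
    (hy : ∀ n : ℕ, y n = x n + ((n : ℝ) / ((n : ℝ) + α)) • (x n - x (n - 1)))
    (hz : ∀ n : ℕ, z n = y n - (1 / L) • f' (y n))
    (hprox : ∀ n : ℕ, ∀ w : H,
      (1 / L) * h (x (n + 1)) + ‖x (n + 1) - z n‖ ^ 2 / 2
        ≤ (1 / L) * h w + ‖w - z n‖ ^ 2 / 2)
    -- `xstar n` is the projection of `x n` onto the closed convex set `X*`
    (xstar : ℕ → H)
    (hxstar : ∀ n : ℕ, xstar n ∈ Xstar ∧ ∀ w ∈ Xstar, ‖x n - xstar n‖ ≤ ‖x n - w‖)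
    -- notation
    (w δ hseq γstar αseq : ℕ → ℝ)
    (hw : ∀ n : ℕ, w n = 2 / L * (F (x n) - Fstar))
    (hδ : ∀ n : ℕ, δ n = ‖x n - x (n - 1)‖ ^ 2)
    (hhseq : ∀ n : ℕ, hseq n = ‖x n - xstar n‖ ^ 2)
    (hγstar : ∀ n : ℕ, γstar n = ‖xstar n - xstar (n - 1)‖ ^ 2)
    (hαseq : ∀ n : ℕ, αseq n = (n : ℝ) / ((n : ℝ) + α))
    (b E : ℕ → ℝ)
    (hb : ∀ n : ℕ,
      b n = ‖lam • (x (n - 1) - xstar (n - 1)) + (n : ℝ) • (x n - x (n - 1))‖ ^ 2)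
    (hE : ∀ n : ℕ, E n = (n : ℝ) ^ 2 * w n + b n)
    (μ : ℝ) (hμ : 0 < μ) :
    ∀ n : ℕ, lam < (n : ℝ) → ∀ A B : ℝ,
      (δ n ≤ 2 * b n / ((n : ℝ) - lam) ^ 2
          + (8 * α ^ 2 / 9) * hseq n / ((n : ℝ) - lam) ^ 2) ∧
      ((∀ v : H, μ / 2 * infDist v Xstar ^ 2 ≤ F v - Fstar) →
        A * δ n + B * (hseq (n - 1) - hseq n) ≤
          (2 * |A + B| + Real.sqrt 2 * |B| / Real.sqrt (μ / L))
              * (1 + 4 * α ^ 2 / (9 * (μ / L) * (n : ℝ) ^ 2)) * E n / ((n : ℝ) - lam) ^ 2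
            - B * γstar n
            + 2 * B * ⟪x (n - 1) - xstar (n - 1), xstar n - xstar (n - 1)⟫) := by
  intro n hn A B
  have hX : Convex ℝ Xstar :=
    hXstar ▸ convex_setOf_forall_le (funext hF ▸ hf_conv.add hh_conv : ConvexOn ℝ Set.univ F)
  subst hlam
  simp only [hE, hb, hw, hδ, hhseq, hγstar]
  exact fista_delta_energy_control_general hX (hxstar (n - 1)) (hxstar n) F Fstar hL hμ
    (by linarith) hn A B
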